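/- Let G be a caterpillar of order n with n ≥ 3. Then φ(G) ≥ ⌈n/2⌉ + 1, with equality if and only if G is isomorphic to one of T(1,1), T(2,1), T(2,2), T(3,1), T(3,2), T(4,2). -/

import Mathlib

open SimpleGraph

/-- A dissociation set: a set of vertices inducing a subgraph of maximum degree at most 1,
i.e., every vertex of `S` has at most one neighbour inside `S`. -/
def IsDissoc {V : Type*} (G : SimpleGraph V) (S : Set V) : Prop :=
  ∀ v ∈ S, {u | u ∈ S ∧ G.Adj v u}.Subsingleton

/-- A maximal dissociation set: a dissociation set not properly contained in another one. -/
def IsMaxDissoc {V : Type*} (G : SimpleGraph V) (S : Set V) : Prop :=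
  IsDissoc G S ∧ ∀ T : Set V, IsDissoc G T → S ⊆ T → S = T

/-- `phi G` is the number of maximal dissociation sets of `G`. -/
noncomputable def phi {V : Type*} (G : SimpleGraph V) : ℕ :=
  {S : Set V | IsMaxDissoc G S}.ncard

/-- The number of maximal dissociation sets of `G` not containing `u`. -/
noncomputable def phiNot {V : Type*} (G : SimpleGraph V) (u : V) : ℕ :=
  {S : Set V | IsMaxDissoc G S ∧ u ∉ S}.ncard

/-- The number of maximal dissociation sets `S` of `G` with `u ∈ S` and
`u` of degree 0 in the subgraph induced by `S`. -/
noncomputable def phi0 {V : Type*} (G : SimpleGraph V) (u : V) : ℕ :=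
  {S : Set V | IsMaxDissoc G S ∧ u ∈ S ∧ ∀ x ∈ S, ¬ G.Adj u x}.ncard

/-- The number of maximal dissociation sets `S` of `G` with `u ∈ S` and
`u` of degree 1 in the subgraph induced by `S`. -/
noncomputable def phi1 {V : Type*} (G : SimpleGraph V) (u : V) : ℕ :=
  {S : Set V | IsMaxDissoc G S ∧ u ∈ S ∧ ∃! x, x ∈ S ∧ G.Adj u x}.ncard

/-- A unicyclic graph: a connected graph whose number of edges equals its number of vertices
(equivalently, a connected graph with exactly one cycle). -/
def IsUnicyclic {V : Type*} [Fintype V] (G : SimpleGraph V) : Prop :=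
  G.Connected ∧ G.edgeSet.ncard = Fintype.card V

/-- The tree `T(p,q)` (for `q ≤ p`): obtained from the star `K_{1,p}` by subdividing
exactly `q` of its edges.  The centre is `Sum.inl ()`, the `p` neighbours of the centre are
`Sum.inr (Sum.inl i)`, and for `j < q` the vertex `Sum.inr (Sum.inr j)` is the subdivision
pendant attached to the `j`-th neighbour.  It has `1 + p + q` vertices. -/
def treeT (p q : ℕ) (h : q ≤ p) : SimpleGraph (Unit ⊕ Fin p ⊕ Fin q) :=
  SimpleGraph.fromRel fun a b =>
    (∃ i : Fin p, a = Sum.inl () ∧ b = Sum.inr (Sum.inl i)) ∨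
    (∃ j : Fin q, a = Sum.inr (Sum.inl (Fin.castLE h j)) ∧ b = Sum.inr (Sum.inr j))

/-- The unicyclic graph `U(p,q)` (for `q ≤ p`): obtained by identifying one vertex of the
triangle `K₃` with the centre of `T(p,q)`.  The centre is `Sum.inl ()`, the two other triangle
vertices are `Sum.inr (Sum.inl 0)` and `Sum.inr (Sum.inl 1)`, and the copy of `T(p,q)` sits on
the remaining vertices.  It has `3 + p + q` vertices. -/
def graphU (p q : ℕ) (h : q ≤ p) : SimpleGraph (Unit ⊕ Fin 2 ⊕ Fin p ⊕ Fin q) :=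
  SimpleGraph.fromRel fun a b =>
    (a = Sum.inl () ∧ b = Sum.inr (Sum.inl 0)) ∨
    (a = Sum.inl () ∧ b = Sum.inr (Sum.inl 1)) ∨
    (a = Sum.inr (Sum.inl 0) ∧ b = Sum.inr (Sum.inl 1)) ∨
    (∃ i : Fin p, a = Sum.inl () ∧ b = Sum.inr (Sum.inr (Sum.inl i))) ∨
    (∃ j : Fin q, a = Sum.inr (Sum.inr (Sum.inl (Fin.castLE h j))) ∧
      b = Sum.inr (Sum.inr (Sum.inr j)))

/-- The unicyclic graph obtained from the cycle `C_r` by attaching one pendant vertex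
`Sum.inr j` to the cycle vertex `Sum.inl (f j)` for each `j : Fin t`.  For injective `f`
this is a member of the class `𝒰_{r,t}`. -/
def graphUrtF (r t : ℕ) (f : Fin t → Fin r) : SimpleGraph (Fin r ⊕ Fin t) :=
  SimpleGraph.fromRel fun a b =>
    (∃ i j : Fin r, a = Sum.inl i ∧ b = Sum.inl j ∧ (cycleGraph r).Adj i j) ∨
    (∃ j : Fin t, a = Sum.inl (f j) ∧ b = Sum.inr j)

/-- The canonical member `U_{r,t}` of `𝒰_{r,t}` (for `t ≤ r`): the cycle `C_r` with one
pendant vertex attached to each of its first `t` vertices. -/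
def graphUrt (r t : ℕ) (h : t ≤ r) : SimpleGraph (Fin r ⊕ Fin t) :=
  graphUrtF r t (Fin.castLE h)

/-- A caterpillar: a tree in which deleting all vertices of degree 1 leaves a path. -/
def IsCaterpillar {V : Type*} [Fintype V] (G : SimpleGraph V) : Prop :=
  G.IsTree ∧ ∃ m : ℕ,
    Nonempty ((G.induce {v | 2 ≤ (G.neighborSet v).ncard}) ≃g SimpleGraph.pathGraph m)

/-- The graph `G₁` obtained from `U` by adding `k` new pendant vertices
`v₁ = Sum.inr 0, …, v_k = Sum.inr (k-1)`, each adjacent to `w`. -/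
def addPendants {V : Type*} (U : SimpleGraph V) (w : V) (k : ℕ) : SimpleGraph (V ⊕ Fin k) :=
  SimpleGraph.fromRel fun a b =>
    (∃ x y, a = Sum.inl x ∧ b = Sum.inl y ∧ U.Adj x y) ∨
    (∃ j : Fin k, a = Sum.inl w ∧ b = Sum.inr j)

/-- The graph `G₂ = G₁ - w v_k + v₁ v_k`: obtained from `U` by attaching the pendant vertices
`v₁, …, v_{k-1}` to `w` and the vertex `v_k` to `v₁`. -/
def swapPendant {V : Type*} (U : SimpleGraph V) (w : V) (k : ℕ) : SimpleGraph (V ⊕ Fin k) :=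
  SimpleGraph.fromRel fun a b =>
    (∃ x y, a = Sum.inl x ∧ b = Sum.inl y ∧ U.Adj x y) ∨
    (∃ j : Fin k, j.val < k - 1 ∧ a = Sum.inl w ∧ b = Sum.inr j) ∨
    (∃ j₀ j₁ : Fin k, j₀.val = 0 ∧ j₁.val = k - 1 ∧ a = Sum.inr j₀ ∧ b = Sum.inr j₁)

/-- The graph obtained from `H` by attaching a pendant path of length 2 at `w`:
two new vertices `v = Sum.inr 0` and `u = Sum.inr 1` with edges `w v` and `v u`. -/
def addPath2 {V : Type*} (H : SimpleGraph V) (w : V) : SimpleGraph (V ⊕ Fin 2) :=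
  SimpleGraph.fromRel fun a b =>
    (∃ x y, a = Sum.inl x ∧ b = Sum.inl y ∧ H.Adj x y) ∨
    (a = Sum.inl w ∧ b = Sum.inr 0) ∨
    (a = Sum.inr 0 ∧ b = Sum.inr 1)

/-! The bound holds for every tree, and equality forces the tree to be a subdivided star.

A tree on at least three vertices has two vertices `x` and `y` that are joined to the remaining
vertices only through one vertex `t`: the two vertices are leaves at `t`, or they form the end of
a pendant path. Deleting them lowers `⌈n/2⌉ + 1` by one. Every maximal dissociation set of
`G - {x, y}` extends to one of `G` that does not contain both `t` and `y` (if it does, exchange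
`y` for `x`), so a maximal dissociation set containing `t` and `y` is left over and `φ` grows by at
least one.

Hence a strict inequality for `G - {x, y}` passes to `G`, and it remains to treat the case where
`G - {x, y}` is a subdivided star `T(p, q)`, i.e. where deleting some vertex `c` leaves a
dissociation set. Either deleting `t` from `G` leaves a dissociation set, so that `G` is itself a
subdivided star, or a second maximal dissociation set `E` is left over: `E` avoids `t`, while the
part of `E` outside `{x, y}` remains a dissociation set when `t` is added, so `E` extends no
maximal dissociation set of `G - {x, y}`. Then `φ` grows by at least two, and the inequality for
`G` is strict.

Finally `φ(T(p, q))` is `p + 1`, or `p + 2` if `p = q`, and `T(p, q)` has `p + q + 1` vertices, so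
equality holds exactly when `p ≤ q + 2`; in a caterpillar `q ≤ 2`, and `T(2, 0)` is `T(1, 1)`. -/

section Dissociation

variable {V U : Type*} {G : SimpleGraph V} {H : SimpleGraph U} {S T : Set V}

theorem IsDissoc.mono (hT : IsDissoc G T) (hST : S ⊆ T) : IsDissoc G S :=
  fun v hv _ ha _ hb => hT v (hST hv) ⟨hST ha.1, ha.2⟩ ⟨hST hb.1, hb.2⟩

theorem IsDissoc.eq_of_adj (hS : IsDissoc G S) {v a b : V} (hv : v ∈ S) (ha : a ∈ S) (hb : b ∈ S)
    (hva : G.Adj v a) (hvb : G.Adj v b) : a = b :=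
  hS v hv ⟨ha, hva⟩ ⟨hb, hvb⟩

theorem not_isDissoc_iff :
    ¬IsDissoc G S ↔ ∃ v ∈ S, ∃ a ∈ S, ∃ b ∈ S, G.Adj v a ∧ G.Adj v b ∧ a ≠ b := by
  simp only [IsDissoc, Set.Subsingleton, Set.mem_ofPred_eq]
  grind

theorem isDissoc_pair (a b : V) : IsDissoc G {a, b} := by
  rintro v hv x ⟨hx, hvx⟩ y ⟨hy, hvy⟩
  have hne_x := hvx.ne
  have hne_y := hvy.ne
  grind

theorem isDissoc_image_iff (e : H ↪g G) {S : Set U} : IsDissoc G (e '' S) ↔ IsDissoc H S := by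
  simp only [IsDissoc, Set.Subsingleton, Set.forall_mem_image, Set.mem_ofPred_eq, and_imp,
    e.map_adj_iff, e.injective.eq_iff]

theorem IsDissoc.exists_isMaxDissoc [Finite V] (hS : IsDissoc G S) :
    ∃ M, IsMaxDissoc G M ∧ S ⊆ M := by
  obtain ⟨M, hSM, hM⟩ := Finite.exists_le_maximal (p := IsDissoc G) hS
  exact ⟨M, ⟨hM.prop, fun T hT hMT => hMT.antisymm (hM.le_of_ge hT hMT)⟩, hSM⟩

theorem IsMaxDissoc.mem_of_isDissoc_insert {v : V} (hS : IsMaxDissoc G S)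
    (hv : IsDissoc G (insert v S)) : v ∈ S := by
  rw [hS.2 _ hv (Set.subset_insert v S)]
  exact Set.mem_insert v S

theorem IsMaxDissoc.preimage_eq (e : H ↪g G) {S : Set U} (hS : IsMaxDissoc H S)
    (hT : IsDissoc G T) (hST : e '' S ⊆ T) : e ⁻¹' T = S :=
  (hS.2 _ ((isDissoc_image_iff e).mp (hT.mono (Set.image_preimage_subset e T)))
    (Set.image_subset_iff.mp hST)).symm

theorem phi_add_ncard_le_of_embedding [Finite V] (e : H ↪g G) {F : Set (Set V)}
    (hF : ∀ E ∈ F, IsMaxDissoc G E)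
    (hext : ∀ S, IsMaxDissoc H S → ∃ M, IsMaxDissoc G M ∧ M ∉ F ∧ e '' S ⊆ M) :
    phi H + F.ncard ≤ phi G := by
  have hsub : {S | IsMaxDissoc H S} ⊆ (e ⁻¹' ·) '' ({M | IsMaxDissoc G M} \ F) := by
    intro S hS
    obtain ⟨M, hM, hMF, hSM⟩ := hext S hS
    exact ⟨M, ⟨hM, hMF⟩, hS.preimage_eq e hM.1 hSM⟩
  calc phi H + F.ncard
      ≤ ({M | IsMaxDissoc G M} \ F).ncard + F.ncard := by
        gcongr
        exact (Set.ncard_le_ncard hsub).trans Set.ncard_image_le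
    _ = phi G := Set.ncard_sdiff_add_ncard_of_subset hF

theorem phi_le_of_embedding [Finite V] (e : H ↪g G) : phi H ≤ phi G := by
  simpa using phi_add_ncard_le_of_embedding e (F := ∅) (by simp) fun S hS =>
    let ⟨M, hM, hSM⟩ := ((isDissoc_image_iff e).mpr hS.1).exists_isMaxDissoc
    ⟨M, hM, Set.notMem_empty M, hSM⟩

theorem phi_congr [Finite V] (e : H ≃g G) : phi H = phi G := by
  have := Finite.of_equiv V e.symm.toEquiv
  exact (phi_le_of_embedding e.toEmbedding).antisymm (phi_le_of_embedding e.symm.toEmbedding)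

theorem phi_eq_phiNot_add_phi1_add_phi0 [Finite V] (c : V) :
    phi G = phiNot G c + phi1 G c + phi0 G c := by
  rw [phi, phiNot, phi1, phi0, ← Set.ncard_union_eq, ← Set.ncard_union_eq]
  · congr 1
    ext S
    simp only [Set.mem_union, Set.mem_ofPred_eq]
    have huniq (hS : IsMaxDissoc G S) (hc : c ∈ S) {x : V} (hx : x ∈ S) (hcx : G.Adj c x) :
        ∃! x, x ∈ S ∧ G.Adj c x :=
      ⟨x, ⟨hx, hcx⟩, fun y hy => hS.1.eq_of_adj hc hy.1 hx hy.2 hcx⟩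
    grind
  · rw [Set.disjoint_left]
    rintro S (⟨-, hc⟩ | ⟨-, -, x, ⟨hx, hcx⟩, -⟩) ⟨-, hc', h0⟩
    exacts [hc hc', h0 x hx hcx]
  · rw [Set.disjoint_left]
    exact fun S h₁ h₂ => h₁.2 h₂.2.1

end Dissociation

section Center

variable {V : Type*} {G : SimpleGraph V} {c : V}

theorem phiNot_eq_one (hc : IsDissoc G {c}ᶜ) (huniv : ¬IsDissoc G Set.univ) : phiNot G c = 1 := by
  rw [phiNot, Set.ncard_eq_one]
  refine ⟨{c}ᶜ, Set.Subset.antisymm ?_ ?_⟩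
  · rintro S ⟨hS, hcS⟩
    exact hS.2 _ hc (Set.subset_compl_singleton_iff.mpr hcS)
  · rintro _ rfl
    refine ⟨⟨hc, fun T hT hcT => hcT.antisymm ?_⟩, by simp⟩
    rw [Set.subset_compl_singleton_iff]
    intro hcmem
    refine huniv (hT.mono fun v _ => ?_)
    by_cases hv : v = c
    exacts [hv ▸ hcmem, hcT hv]

/-- The set consisting of the edge `cu` and of all vertices adjacent to neither end; the only
candidate for a maximal dissociation set containing both `c` and its neighbour `u`. -/
def edgeDissoc (G : SimpleGraph V) (c u : V) : Set V :=
  {v | v = c ∨ v = u ∨ ¬G.Adj c v ∧ ¬G.Adj u v}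

theorem IsDissoc.subset_edgeDissoc {S : Set V} {u : V} (hS : IsDissoc G S) (hc : c ∈ S)
    (hu : u ∈ S) (hcu : G.Adj c u) : S ⊆ edgeDissoc G c u := fun v hv => by
  by_cases hcv : G.Adj c v
  · exact .inr (.inl (hS.eq_of_adj hc hv hu hcv hcu))
  · by_cases huv : G.Adj u v
    · exact .inl (hS.eq_of_adj hu hv hc huv hcu.symm)
    · exact .inr (.inr ⟨hcv, huv⟩)

theorem isMaxDissoc_edgeDissoc (hc : IsDissoc G {c}ᶜ) {u : V} (hcu : G.Adj c u) :
    IsMaxDissoc G (edgeDissoc G c u) := by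
  have hcmem : c ∈ edgeDissoc G c u := .inl rfl
  have humem : u ∈ edgeDissoc G c u := .inr (.inl rfl)
  refine ⟨?_, fun T hT hsub => hsub.antisymm (hT.subset_edgeDissoc (hsub hcmem) (hsub humem) hcu)⟩
  by_contra hnot
  obtain ⟨v, hv, a, ha, b, hb, hva, hvb, hab⟩ := not_isDissoc_iff.mp hnot
  simp only [edgeDissoc, Set.mem_ofPred_eq] at hv ha hb
  have hcompl : v = c ∨ a = c ∨ b = c := by
    by_contra! h
    exact hab (hc.eq_of_adj h.1 h.2.1 h.2.2 hva hvb)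
  have hav := hva.symm
  have hbv := hvb.symm
  have hc_irr := G.irrefl (v := c)
  have hu_irr := G.irrefl (v := u)
  grind

theorem phi1_eq_ncard_neighborSet (hc : IsDissoc G {c}ᶜ) :
    phi1 G c = (G.neighborSet c).ncard := by
  refine (Set.BijOn.ncard_eq (f := edgeDissoc G c) ⟨fun u hu => ?_, ?_, ?_⟩).symm
  · have hmax := isMaxDissoc_edgeDissoc hc hu
    exact ⟨hmax, .inl rfl, u, ⟨.inr (.inl rfl), hu⟩,
      fun v hv => hmax.1.eq_of_adj (.inl rfl) hv.1 (.inr (.inl rfl)) hv.2 hu⟩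
  · intro u hu u' hu' heq
    have hmem : u ∈ edgeDissoc G c u' := heq ▸ .inr (.inl rfl)
    exact (isMaxDissoc_edgeDissoc hc hu').1.eq_of_adj (.inl rfl) hmem (.inr (.inl rfl)) hu hu'
  · rintro S ⟨hS, hcS, u, ⟨huS, hcu⟩, -⟩
    exact ⟨u, hcu, (hS.2 _ (isMaxDissoc_edgeDissoc hc hcu).1
      (hS.1.subset_edgeDissoc hcS huS hcu)).symm⟩

theorem isDissoc_compl_neighborSet (hc : IsDissoc G {c}ᶜ) : IsDissoc G (G.neighborSet c)ᶜ :=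
  fun _ hv _ ha _ hb =>
    have ne_of_adj {u w : V} (hu : u ∉ G.neighborSet c) (hwu : G.Adj w u) : w ≠ c :=
      fun h => hu (h ▸ hwu)
    hc.eq_of_adj (ne_of_adj ha.1 ha.2) (ne_of_adj hv ha.2.symm) (ne_of_adj hv hb.2.symm) ha.2 hb.2

theorem isMaxDissoc_compl_neighborSet_iff (hc : IsDissoc G {c}ᶜ) :
    IsMaxDissoc G (G.neighborSet c)ᶜ ↔ ∀ u, G.Adj c u → ∃ v, v ≠ c ∧ ¬G.Adj c v ∧ G.Adj u v := by
  refine ⟨fun hmax u hcu => ?_, fun h => ⟨isDissoc_compl_neighborSet hc, fun T hT hsub =>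
    hsub.antisymm fun u hu hcu => ?_⟩⟩
  · by_contra! hnone
    have hins : insert u (G.neighborSet c)ᶜ ⊆ edgeDissoc G c u := by
      rintro v (rfl | hcv)
      · exact .inr (.inl rfl)
      · by_cases hv : v = c
        · exact .inl hv
        · exact .inr (.inr ⟨hcv, hnone v hv hcv⟩)
    exact hmax.mem_of_isDissoc_insert ((isMaxDissoc_edgeDissoc hc hcu).1.mono hins) hcu
  · obtain ⟨v, hvc, hcv, huv⟩ := h u hcu
    exact hvc (hT.eq_of_adj hu (hsub hcv) (hsub G.irrefl) huv hcu.symm)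

open Classical in
theorem phi0_eq_ite (hc : IsDissoc G {c}ᶜ) :
    phi0 G c = if ∀ u, G.Adj c u → ∃ v, v ≠ c ∧ ¬G.Adj c v ∧ G.Adj u v then 1 else 0 := by
  have heq {S : Set V} (hS : IsMaxDissoc G S) (h0 : ∀ x ∈ S, ¬G.Adj c x) :
      S = (G.neighborSet c)ᶜ := hS.2 _ (isDissoc_compl_neighborSet hc) h0
  simp only [← isMaxDissoc_compl_neighborSet_iff hc]
  split_ifs with hmax
  · rw [phi0, Set.ncard_eq_one]
    refine ⟨(G.neighborSet c)ᶜ, Set.Subset.antisymm (fun S hS => heq hS.1 hS.2.2) ?_⟩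
    rintro _ rfl
    exact ⟨hmax, G.irrefl, fun _ => id⟩
  · have hempty : {S | IsMaxDissoc G S ∧ c ∈ S ∧ ∀ x ∈ S, ¬G.Adj c x} = ∅ :=
      Set.eq_empty_of_forall_notMem fun S hS => hmax (heq hS.1 hS.2.2 ▸ hS.1)
    rw [phi0, hempty, Set.ncard_empty]

end Center

section PendantPair

variable {V : Type*} {G : SimpleGraph V} {x y t : V} {S : Set V}

/-- A pendant pair with attachment vertex `t`: the vertices `x`, `y`, `t` span a path on three
vertices, and only `t` has neighbours outside it.  Thus `x` and `y` are either two leaves at `t`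
or the end of a pendant path `x`–`y`–`t`. -/
structure IsPendantPair (G : SimpleGraph V) (x y t : V) : Prop where
  ne : x ≠ y
  ne_left : x ≠ t
  adj : G.Adj y t
  eq_or_eq_of_adj : ∀ z, G.Adj y z → z = x ∨ z = t
  leaf : (∀ z, G.Adj x z ↔ z = y) ∨ ∀ z, G.Adj x z ↔ z = t

namespace IsPendantPair

theorem notMem_of_mem_of_mem (h : IsPendantPair G x y t) (hS : IsDissoc G S) (hx : x ∈ S)
    (hy : y ∈ S) : t ∉ S := by
  intro ht
  obtain hleaf | hleaf := h.leaf
  · exact h.ne_left (hS.eq_of_adj hy hx ht ((hleaf y).mpr rfl).symm h.adj)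
  · exact h.ne (hS.eq_of_adj ht hx hy ((hleaf t).mpr rfl).symm h.adj.symm)

theorem isDissoc_union (h : IsPendantPair G x y t) (hS : IsDissoc G S) (ht : t ∉ S) :
    IsDissoc G ({x, y} ∪ S) := by
  by_contra hnot
  obtain ⟨v, hv, a, ha, b, hb, hva, hvb, hab⟩ := not_isDissoc_iff.mp hnot
  have hS' : v ∈ S → a ∈ S → b ∈ S → a = b := fun hv ha hb => hS.eq_of_adj hv ha hb hva hvb
  have hxy : ∀ z ∈ {x, y} ∪ S, (G.Adj x z → z = y) ∧ (G.Adj y z → z = x) := fun z hz => by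
    have hzt : z ≠ t := by grind [h.ne_left, h.adj.ne]
    grind [IsPendantPair]
  grind [SimpleGraph.adj_comm]

theorem isDissoc_swap (h : IsPendantPair G x y t) (hS : IsDissoc G S) (ht : t ∈ S)
    (hy : y ∈ S) : IsDissoc G (insert x (S \ {y})) := by
  by_contra hnot
  obtain ⟨v, hv, a, ha, b, hb, hva, hvb, hab⟩ := not_isDissoc_iff.mp hnot
  have hS' : v ∈ S → a ∈ S → b ∈ S → a = b := fun hv ha hb => hS.eq_of_adj hv ha hb hva hvb
  have hty : ∀ z ∈ S, G.Adj t z → z = y := fun z hz htz => hS.eq_of_adj ht hz hy htz h.adj.symm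
  have hxt : ∀ z ∈ insert x (S \ {y}), G.Adj x z → z = t := by grind [IsPendantPair]
  grind [SimpleGraph.adj_comm]

theorem exists_isMaxDissoc_superset [Finite V] (h : IsPendantPair G x y t) (hS : IsDissoc G S)
    (hy : y ∉ S) : ∃ M, IsMaxDissoc G M ∧ S ⊆ M ∧ ¬(t ∈ M ∧ y ∈ M) := by
  obtain ⟨M, hM, hSM⟩ := hS.exists_isMaxDissoc
  by_cases hty : t ∈ M ∧ y ∈ M
  · obtain ⟨N, hN, hMN⟩ := (h.isDissoc_swap hM.1 hty.1 hty.2).exists_isMaxDissoc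
    refine ⟨N, hN, ?_, fun ⟨htN, hyN⟩ =>
      h.notMem_of_mem_of_mem hN.1 (hMN (Set.mem_insert x _)) hyN htN⟩
    exact ((Set.subset_sdiff_singleton hSM hy).trans (Set.subset_insert x _)).trans hMN
  · exact ⟨M, hM, hSM, hty⟩

theorem phi_induce_add_ncard_le [Finite V] (h : IsPendantPair G x y t) {F : Set (Set V)}
    (hF : ∀ E ∈ F, IsMaxDissoc G E)
    (hFext : ∀ E ∈ F, (t ∈ E ∧ y ∈ E) ∨ t ∉ E ∧ IsDissoc G (insert t (E \ {x, y}))) :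
    phi (G.induce {x, y}ᶜ) + F.ncard ≤ phi G := by
  let e := Embedding.induce (G := G) {x, y}ᶜ
  refine phi_add_ncard_le_of_embedding e hF fun S hS => ?_
  have hxy : e '' S ⊆ {x, y}ᶜ := by
    rintro _ ⟨v, -, rfl⟩
    exact v.2
  have hy : y ∉ e '' S := fun hy => hxy hy (.inr rfl)
  obtain ⟨M, hM, hSM, hMty⟩ := h.exists_isMaxDissoc_superset ((isDissoc_image_iff e).mpr hS.1) hy
  refine ⟨M, hM, fun hMF => ?_, hSM⟩
  obtain hty | ⟨htM, hins⟩ := hFext M hMF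
  · exact hMty hty
  · let t' : ({x, y}ᶜ : Set V) := ⟨t, by simp [h.ne_left.symm, h.adj.ne']⟩
    have hins' : IsDissoc G (e '' insert t' S) := by
      rw [Set.image_insert_eq]
      exact hins.mono (Set.insert_subset_insert fun v hv => ⟨hSM hv, hxy hv⟩)
    exact htM (hSM ⟨t', hS.mem_of_isDissoc_insert ((isDissoc_image_iff e).mp hins'), rfl⟩)

theorem phi_induce_lt [Finite V] (h : IsPendantPair G x y t) :
    phi (G.induce {x, y}ᶜ) < phi G := by
  obtain ⟨E, hE, htE⟩ := (isDissoc_pair (G := G) t y).exists_isMaxDissoc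
  have hle := h.phi_induce_add_ncard_le (F := {E}) (by simpa using hE)
    (by simpa using .inl ⟨htE (.inl rfl), htE (.inr rfl)⟩)
  rwa [Set.ncard_singleton] at hle

theorem not_isDissoc_compl (h : IsPendantPair G x y t) (ht : ¬IsDissoc G {t}ᶜ) :
    ¬IsDissoc G {x, y, t}ᶜ := fun hdis =>
  ht ((h.isDissoc_union hdis (by simp)).mono (by grind))

theorem exists_isMaxDissoc_notMem [Finite V] (h : IsPendantPair G x y t) {c : V}
    (hc : IsDissoc G {x, y, c}ᶜ) (ht : ¬IsDissoc G {t}ᶜ) :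
    ∃ E, IsMaxDissoc G E ∧ t ∉ E ∧ IsDissoc G (insert t (E \ {x, y})) := by
  have hrest := h.not_isDissoc_compl ht
  have htc : t ≠ c := by
    rintro rfl
    exact hrest hc
  have hdel : IsDissoc G ({x, y, t}ᶜ \ {c}) := hc.mono (by grind)
  obtain ⟨E, hE, hsub⟩ := (h.isDissoc_union hdel (by simp)).exists_isMaxDissoc
  have htE : t ∉ E := h.notMem_of_mem_of_mem hE.1 (hsub (by simp)) (hsub (by simp))
  have hcE : c ∉ E := fun hcE => hrest (hE.1.mono (by grind))
  exact ⟨E, hE, htE, hc.mono (by grind [h.ne_left, h.adj.ne])⟩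

theorem phi_induce_add_two_le [Finite V] (h : IsPendantPair G x y t) {c : V}
    (hc : IsDissoc G {x, y, c}ᶜ) (ht : ¬IsDissoc G {t}ᶜ) :
    phi (G.induce {x, y}ᶜ) + 2 ≤ phi G := by
  obtain ⟨E₁, hE₁, htE₁⟩ := (isDissoc_pair (G := G) t y).exists_isMaxDissoc
  obtain ⟨E₂, hE₂, htE₂, hinsert⟩ := h.exists_isMaxDissoc_notMem hc ht
  have hne : E₁ ≠ E₂ := fun heq => htE₂ (heq ▸ htE₁ (.inl rfl))
  rw [← Set.ncard_pair hne]
  refine h.phi_induce_add_ncard_le ?_ ?_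
  · rintro E (rfl | rfl)
    exacts [hE₁, hE₂]
  · rintro E (rfl | rfl)
    exacts [.inl ⟨htE₁ (.inl rfl), htE₁ (.inr rfl)⟩, .inr ⟨htE₂, hinsert⟩]

end IsPendantPair

end PendantPair

section Tree

variable {V : Type*} {G : SimpleGraph V}

theorem isDissoc_univ_iff_card_le_two [Finite V] (hG : G.Connected) :
    IsDissoc G Set.univ ↔ Nat.card V ≤ 2 := by
  constructor
  · intro hdis
    have ⟨u⟩ := hG.nonempty
    have hsub : (G.neighborSet u).Subsingleton := fun a ha b hb =>
      hdis.eq_of_adj trivial trivial trivial ha hb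
    have huniv : (Set.univ : Set V) ⊆ insert u (G.neighborSet u) := by
      intro v _
      by_contra hv
      obtain ⟨w⟩ := hG u v
      obtain ⟨⟨⟨a, b⟩, hab⟩, -, ha, hb⟩ := w.exists_boundary_dart _ (Set.mem_insert u _) hv
      obtain rfl | ha := ha
      · exact hb (.inr hab)
      · exact hb (.inl (hdis.eq_of_adj trivial trivial trivial hab ha.symm))
    calc Nat.card V = (Set.univ : Set V).ncard := (Set.ncard_univ V).symm
      _ ≤ (insert u (G.neighborSet u)).ncard := Set.ncard_le_ncard huniv
      _ ≤ (G.neighborSet u).ncard + 1 := Set.ncard_insert_le u _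
      _ ≤ 2 := Nat.succ_le_succ (Set.ncard_le_one_iff_subsingleton.mpr hsub)
  · contrapose!
    intro hnot
    obtain ⟨v, -, a, -, b, -, hva, hvb, hab⟩ := not_isDissoc_iff.mp hnot
    rw [← Set.ncard_univ, Set.two_lt_ncard_iff]
    exact ⟨v, a, b, trivial, trivial, trivial, hva.ne, hvb.ne, hab⟩

theorem IsPendantPair.isTree_induce {x y t : V} (h : IsPendantPair G x y t) (hG : G.IsTree) :
    (G.induce {x, y}ᶜ).IsTree := by
  classical
  have ht : t ∈ ({x, y}ᶜ : Set V) := by simp [h.ne_left.symm, h.adj.ne']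
  let r (v : V) : ({x, y}ᶜ : Set V) := if hv : v ∈ ({x, y}ᶜ : Set V) then ⟨v, hv⟩ else ⟨t, ht⟩
  have hr_adj {u v : V} (huv : G.Adj u v) : r u = r v ∨ (G.induce {x, y}ᶜ).Adj (r u) (r v) := by
    simp only [r]
    grind [IsPendantPair, SimpleGraph.adj_comm, SimpleGraph.induce_adj]
  have hr_walk {u v : V} (w : G.Walk u v) : (G.induce {x, y}ᶜ).Reachable (r u) (r v) := by
    induction w with
    | nil => exact .rfl
    | cons huv _ ih =>
      obtain heq | hadj := hr_adj huv
      · exact heq ▸ ih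
      · exact hadj.reachable.trans ih
  refine ⟨(connected_iff _).mpr ⟨fun u v => ?_, ⟨t, ht⟩⟩, hG.isAcyclic.induce _⟩
  obtain ⟨w⟩ := hG.connected u.1 v.1
  have hr (u : ({x, y}ᶜ : Set V)) : r u = u := dif_pos u.2
  rw [← hr u, ← hr v]
  exact hr_walk w

theorem adj_start_iff_of_isAcyclic_of_longest (hG : G.IsAcyclic) {u s v : V} {h : G.Adj u s}
    {p : G.Walk s v} (hp : (p.cons h).IsPath)
    (hmax : ∀ (u' v' : V) (q : G.Walk u' v'), q.IsPath → q.length ≤ (p.cons h).length) (z : V) :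
    G.Adj u z ↔ z = s := by
  refine ⟨fun hz => ?_, fun hz => hz ▸ h⟩
  by_cases hmem : z ∈ (p.cons h).support
  · simpa using hG.eq_snd_of_adj_start hp hz hmem
  · have := hmax _ _ _ (hp.cons hmem (h := hz.symm))
    simp at this

theorem exists_isPendantPair_of_isAcyclic [Finite V] (hG : G.IsAcyclic)
    (hdis : ¬IsDissoc G Set.univ) : ∃ x y t, IsPendantPair G x y t := by
  obtain ⟨v, -, a, -, b, -, hva, hvb, hab⟩ := not_isDissoc_iff.mp hdis
  have : Nonempty V := ⟨v⟩
  obtain ⟨u, w, p, hp, hmax⟩ := Walk.exists_isPath_forall_isPath_length_le_length G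
  have hlen : 2 ≤ p.length := hmax a b (.cons hva.symm (.cons hvb .nil)) (by
    simp [hva.ne', hvb.ne, hab])
  match p with
  | .nil => simp at hlen
  | .cons h .nil => simp at hlen
  | .cons (v := s) h (.cons (v := t) h' p) =>
    have hu := adj_start_iff_of_isAcyclic_of_longest hG hp hmax
    have hsp := hp.of_cons
    have hut : u ≠ t := by
      rintro rfl
      simp at hp
    by_cases hz : ∃ z, z ≠ u ∧ z ≠ t ∧ G.Adj s z
    · obtain ⟨z, hzu, hzt, hsz⟩ := hz
      have hmem : z ∉ (p.cons h').support := fun hmem =>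
        hzt (by simpa using hG.eq_snd_of_adj_start hsp hsz hmem)
      have hleaf := adj_start_iff_of_isAcyclic_of_longest hG (hsp.cons hmem (h := hsz.symm))
        (by simpa using hmax)
      exact ⟨z, u, s, hzu, hsz.ne', h, fun z' hz' => .inr ((hu z').mp hz'), .inr hleaf⟩
    · exact ⟨u, s, t, h.ne, hut, h', by grind, .inl hu⟩

end Tree

section SubdividedStar

variable {p q : ℕ} {h : q ≤ p}

theorem treeT_adj_inl {x : Unit} {v : Unit ⊕ Fin p ⊕ Fin q} :
    (treeT p q h).Adj (.inl x) v ↔ ∃ i, v = .inr (.inl i) := by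
  rcases v with - | i | j <;> simp [treeT]

theorem treeT_adj_inr_inl {i : Fin p} {v : Unit ⊕ Fin p ⊕ Fin q} :
    (treeT p q h).Adj (.inr (.inl i)) v ↔
      v = .inl () ∨ ∃ j, Fin.castLE h j = i ∧ v = .inr (.inr j) := by
  rcases v with - | i' | j <;> simp [treeT, eq_comm]

theorem treeT_adj_inr_inr {j : Fin q} {v : Unit ⊕ Fin p ⊕ Fin q} :
    (treeT p q h).Adj (.inr (.inr j)) v ↔ v = .inr (.inl (Fin.castLE h j)) := by
  rcases v with - | i | j' <;> simp [treeT, eq_comm]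

theorem ncard_neighborSet_treeT_inl : ((treeT p q h).neighborSet (.inl ())).ncard = p := by
  have hrange : (treeT p q h).neighborSet (.inl ()) = Set.range (Sum.inr ∘ Sum.inl) := by
    ext v
    simp only [mem_neighborSet, treeT_adj_inl, Set.mem_range, Function.comp_apply, eq_comm]
  rw [hrange, Set.ncard_range_of_injective (Sum.inr_injective.comp Sum.inl_injective),
    Nat.card_fin]

theorem isDissoc_treeT_compl_inl : IsDissoc (treeT p q h) {.inl ()}ᶜ := by
  rintro (_ | i | j) hv a ⟨ha, hva⟩ b ⟨hb, hvb⟩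
  · exact absurd rfl hv
  · obtain ⟨j, hj, rfl⟩ := (treeT_adj_inr_inl.mp hva).resolve_left ha
    obtain ⟨j', hj', rfl⟩ := (treeT_adj_inr_inl.mp hvb).resolve_left hb
    rw [Fin.castLE_injective h (hj.trans hj'.symm)]
  · rw [treeT_adj_inr_inr] at hva hvb
    exact hva.trans hvb.symm

theorem not_isDissoc_treeT_univ (hpq : 2 ≤ p + q) : ¬IsDissoc (treeT p q h) Set.univ := by
  rw [not_isDissoc_iff]
  let i : Fin p := ⟨0, by omega⟩
  obtain hp | hp := Nat.lt_or_ge 1 p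
  · exact ⟨.inl (), trivial, .inr (.inl i), trivial, .inr (.inl ⟨1, hp⟩), trivial,
      treeT_adj_inl.mpr ⟨_, rfl⟩, treeT_adj_inl.mpr ⟨_, rfl⟩, by simp [i]⟩
  · exact ⟨.inr (.inl i), trivial, .inl (), trivial, .inr (.inr ⟨0, by omega⟩), trivial,
      treeT_adj_inr_inl.mpr (.inl rfl), treeT_adj_inr_inl.mpr (.inr ⟨_, rfl, rfl⟩), by simp⟩

theorem phi_treeT (hpq : 2 ≤ p + q) : phi (treeT p q h) = p + 1 + if p = q then 1 else 0 := by
  have hc := isDissoc_treeT_compl_inl (h := h)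
  rw [phi_eq_phiNot_add_phi1_add_phi0 (.inl ()), phiNot_eq_one hc (not_isDissoc_treeT_univ hpq),
    phi1_eq_ncard_neighborSet hc, ncard_neighborSet_treeT_inl, phi0_eq_ite hc, add_comm 1 p]
  congr 2
  rw [eq_iff_iff]
  constructor
  · intro hall
    refine h.antisymm' (not_lt.mp fun hlt => ?_)
    obtain ⟨v, hvc, -, hv⟩ := hall (.inr (.inl ⟨q, hlt⟩)) (treeT_adj_inl.mpr ⟨_, rfl⟩)
    obtain ⟨j, hj, -⟩ := (treeT_adj_inr_inl.mp hv).resolve_left hvc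
    exact j.isLt.ne (congrArg Fin.val hj)
  · rintro rfl u hu
    obtain ⟨i, rfl⟩ := treeT_adj_inl.mp hu
    exact ⟨.inr (.inr i), by simp, by simp [treeT_adj_inl],
      treeT_adj_inr_inl.mpr (.inr ⟨i, rfl, rfl⟩)⟩

variable {V : Type*} {G : SimpleGraph V} {c : V}

theorem bijective_sumElim_neighborSet {ι κ : Type*} (a : ι ≃ G.neighborSet c)
    (b : κ ≃ {v | v ≠ c ∧ ¬G.Adj c v}) :
    Function.Bijective
      (Sum.elim (fun _ : Unit => c) (Sum.elim (fun i => ↑(a i)) fun j => ↑(b j))) := by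
  have hca (i) : G.Adj c (a i) := (a i).2
  constructor
  · refine .sumElim (Function.injective_of_subsingleton _)
      (.sumElim (Subtype.val_injective.comp a.injective)
        (Subtype.val_injective.comp b.injective) fun i j heq => ?_) ?_
    · exact (b j).2.2 (heq ▸ hca i)
    · rintro - (i | j)
      exacts [(hca i).ne, (b j).2.1.symm]
  · intro v
    by_cases hvc : v = c
    · exact ⟨.inl (), hvc.symm⟩
    by_cases hcv : G.Adj c v
    · exact ⟨.inr (.inl (a.symm ⟨v, hcv⟩)), by simp⟩
    · exact ⟨.inr (.inr (b.symm ⟨v, hvc, hcv⟩)), by simp⟩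

theorem nonempty_iso_treeT (hG : G.IsAcyclic) (hc : IsDissoc G {c}ᶜ) (h : q ≤ p)
    (a : Fin p ≃ G.neighborSet c) (b : Fin q ≃ {v | v ≠ c ∧ ¬G.Adj c v})
    (hab : ∀ j, G.Adj (a (Fin.castLE h j)) (b j)) : Nonempty (G ≃g treeT p q h) := by
  let f : Unit ⊕ Fin p ⊕ Fin q → V := Sum.elim (fun _ => c) (Sum.elim (a ·) (b ·))
  have hca (i) : G.Adj c (a i) := (a i).2
  have hcb (j) : ¬G.Adj c (b j) := (b j).2.2
  have haa (i i') : ¬G.Adj (a i) (a i') := fun hadj => by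
    classical
    exact hG.cliqueFree le_rfl {c, ↑(a i), ↑(a i')}
      (is3Clique_triple_iff.mpr ⟨hca i, hca i', hadj⟩)
  have hb_eq {j} {v : V} (hv : G.Adj (b j) v) : v = a (Fin.castLE h j) :=
    hc.eq_of_adj (b j).2.1 (fun hvc => hcb j (hvc ▸ hv).symm) (hca _).ne' hv (hab j).symm
  have hbb (j j') : ¬G.Adj (b j) (b j') := fun hadj => hcb j' (hb_eq hadj ▸ hca _)
  have hba (i j) : G.Adj (b j) (a i) ↔ Fin.castLE h j = i :=
    ⟨fun hadj => (a.injective (Subtype.ext (hb_eq hadj))).symm, fun heq => heq ▸ (hab j).symm⟩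
  have hadj (u v) : G.Adj (f u) (f v) ↔ (treeT p q h).Adj u v := by
    rcases u with ⟨⟩ | i | j <;> rcases v with ⟨⟩ | i' | j' <;>
      simp [f, treeT_adj_inl, treeT_adj_inr_inl, treeT_adj_inr_inr, hca, hcb, haa, hbb, hba,
        G.adj_comm _ (b _).1, G.adj_comm _ c, eq_comm]
  exact ⟨(⟨.ofBijective f (bijective_sumElim_neighborSet a b), hadj _ _⟩ : treeT p q h ≃g G).symm⟩

theorem exists_adj_adj_of_isDissoc_compl (hG : G.Preconnected) (hc : IsDissoc G {c}ᶜ) {v : V}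
    (hv : v ≠ c) (hcv : ¬G.Adj c v) : ∃ u, G.Adj c u ∧ G.Adj u v := by
  obtain ⟨w, hw⟩ := hG.exists_isPath v c
  match w with
  | .nil => exact absurd rfl hv
  | .cons hadj .nil => exact absurd hadj.symm hcv
  | .cons (v := u) hvu (.cons (v := s) hus w) =>
    obtain rfl | hsc := eq_or_ne s c
    · exact ⟨u, hus.symm, hvu.symm⟩
    have huc : u ≠ c := by
      rintro rfl
      exact hcv hvu.symm
    have hvs : v = s := hc.eq_of_adj huc hv hsc hvu.symm hus
    simp [hvs] at hw

theorem exists_iso_treeT_of_isDissoc_compl [Finite V] (hG : G.IsTree) (hc : IsDissoc G {c}ᶜ) :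
    ∃ p q, ∃ h : q ≤ p, Nonempty (G ≃g treeT p q h) := by
  let A := G.neighborSet c
  let B := {v | v ≠ c ∧ ¬G.Adj c v}
  have hparent (v : B) : ∃ u : A, G.Adj u v := by
    obtain ⟨u, hcu, huv⟩ :=
      exists_adj_adj_of_isDissoc_compl hG.connected.preconnected hc v.2.1 v.2.2
    exact ⟨⟨u, hcu⟩, huv⟩
  choose f hf using hparent
  have hf_inj : Function.Injective f := fun v v' heq =>
    Subtype.ext (hc.eq_of_adj (f v).2.ne' v.2.1 v'.2.1 (hf v) (heq ▸ hf v'))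
  have hle : Nat.card B ≤ Nat.card A := Nat.card_le_card_of_injective f hf_inj
  let a := (Finite.equivFin A).symm
  let b := (Finite.equivFin B).symm
  obtain ⟨σ, hσ⟩ := Equiv.Perm.exists_extending_pair (Fin.castLE hle) (a.symm ∘ f ∘ b)
    (Fin.castLE_injective hle) (a.symm.injective.comp (hf_inj.comp b.injective))
  exact ⟨_, _, hle, nonempty_iso_treeT hG.isAcyclic hc hle (σ.trans a) b fun j => by
    simpa only [Equiv.trans_apply, hσ, Function.comp_apply, Equiv.apply_symm_apply] using hf (b j)⟩

end SubdividedStar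

section Induction

variable {V : Type*} {G : SimpleGraph V}

theorem card_eq_of_iso_treeT {p q : ℕ} {h : q ≤ p} (e : G ≃g treeT p q h) :
    Nat.card V = 1 + (p + q) := by
  simp [Nat.card_congr e.toEquiv]

theorem phi_eq_of_iso_treeT {p q : ℕ} {h : q ≤ p} (e : G ≃g treeT p q h) (hV : 3 ≤ Nat.card V) :
    phi G = p + 1 + if p = q then 1 else 0 := by
  rw [phi_congr e, phi_treeT]
  rw [card_eq_of_iso_treeT e] at hV
  omega

theorem le_phi_of_iso_treeT {p q : ℕ} {h : q ≤ p} (e : G ≃g treeT p q h) (hV : 3 ≤ Nat.card V) :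
    (Nat.card V + 1) / 2 + 1 ≤ phi G := by
  rw [phi_eq_of_iso_treeT e hV, card_eq_of_iso_treeT e]
  split_ifs <;> omega

theorem phi_eq_iff_of_iso_treeT {p q : ℕ} {h : q ≤ p} (e : G ≃g treeT p q h)
    (hV : 3 ≤ Nat.card V) : phi G = (Nat.card V + 1) / 2 + 1 ↔ p ≤ q + 2 := by
  rw [phi_eq_of_iso_treeT e hV, card_eq_of_iso_treeT e]
  split_ifs <;> omega

theorem IsPendantPair.card_induce_add_two [Finite V] {x y t : V} (h : IsPendantPair G x y t) :
    Nat.card ({x, y}ᶜ : Set V) + 2 = Nat.card V := by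
  rw [Nat.card_coe_set_eq, ← Set.ncard_pair h.ne, add_comm, Set.ncard_add_ncard_compl]

theorem exists_isDissoc_compl_or_lt_phi [Finite V] (hG : G.IsTree) (hV : 3 ≤ Nat.card V) :
    (∃ c, IsDissoc G {c}ᶜ) ∨ (Nat.card V + 1) / 2 + 1 < phi G := by
  induction hn : Nat.card V using Nat.strong_induction_on generalizing V with | _ n ih
  have huniv : ¬IsDissoc G Set.univ := by
    rw [isDissoc_univ_iff_card_le_two hG.connected]
    omega
  obtain ⟨x, y, t, h⟩ := exists_isPendantPair_of_isAcyclic hG.isAcyclic huniv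
  by_cases ht : IsDissoc G {t}ᶜ
  · exact .inl ⟨t, ht⟩
  right
  have hcard := h.card_induce_add_two
  have hH := h.isTree_induce hG
  have hHV : 3 ≤ Nat.card ({x, y}ᶜ : Set V) := by
    by_contra! hlt
    have hdis := (isDissoc_univ_iff_card_le_two hH.connected).mpr (Nat.le_of_lt_succ hlt)
    rw [← isDissoc_image_iff (Embedding.induce _)] at hdis
    exact h.not_isDissoc_compl ht (hdis.mono fun v hv => ⟨⟨v, by grind⟩, trivial, rfl⟩)
  obtain ⟨c, hc⟩ | hlt := ih _ (by omega) hH hHV rfl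
  · obtain ⟨p, q, _, ⟨e⟩⟩ := exists_iso_treeT_of_isDissoc_compl hH hc
    have hle := le_phi_of_iso_treeT e hHV
    have hcG : IsDissoc G {x, y, ↑c}ᶜ :=
      ((isDissoc_image_iff (Embedding.induce _)).mpr hc).mono fun v hv =>
        ⟨⟨v, by grind⟩, by grind, rfl⟩
    have := h.phi_induce_add_two_le hcG ht
    omega
  · have := h.phi_induce_lt
    omega

end Induction

theorem stmt7_general {V : Type*} [Fintype V] (G : SimpleGraph V) (n : ℕ) (hn : 3 ≤ n)
    (hcard : Fintype.card V = n) (hG : G.IsTree) :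
    (n + 1) / 2 + 1 ≤ phi G ∧
      (phi G = (n + 1) / 2 + 1 ↔
        ∃ p q, ∃ h : q ≤ p, p ≤ q + 2 ∧ Nonempty (G ≃g treeT p q h)) := by
  rw [← Nat.card_eq_fintype_card] at hcard
  subst hcard
  obtain ⟨c, hc⟩ | hlt := exists_isDissoc_compl_or_lt_phi hG hn
  · obtain ⟨p, q, h, ⟨e⟩⟩ := exists_iso_treeT_of_isDissoc_compl hG hc
    exact ⟨le_phi_of_iso_treeT e hn,
      fun heq => ⟨p, q, h, (phi_eq_iff_of_iso_treeT e hn).mp heq, ⟨e⟩⟩,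
      fun ⟨_, _, _, hle, ⟨e'⟩⟩ => (phi_eq_iff_of_iso_treeT e' hn).mpr hle⟩
  · exact ⟨hlt.le, fun heq => absurd heq hlt.ne',
      fun ⟨_, _, _, hle, ⟨e⟩⟩ => (phi_eq_iff_of_iso_treeT e hn).mpr hle⟩

section Caterpillar

variable {V : Type*} [Fintype V] {G : SimpleGraph V}

theorem IsCaterpillar.ncard_inner_neighbors_le_two (hG : IsCaterpillar G) (v : V) :
    {u | G.Adj v u ∧ 2 ≤ (G.neighborSet u).ncard}.ncard ≤ 2 := by
  by_contra! hlt
  obtain ⟨a, b, d, ⟨hva, ha⟩, ⟨hvb, hb⟩, ⟨hvd, hd⟩, hab, had, hbd⟩ :=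
    (Set.two_lt_ncard_iff).mp hlt
  have hv : 2 ≤ (G.neighborSet v).ncard := (Set.one_lt_ncard_iff).mpr ⟨a, b, hva, hvb, hab⟩
  obtain ⟨-, m, ⟨e⟩⟩ := hG
  have hadj {u} (hu : 2 ≤ (G.neighborSet u).ncard) (hvu : G.Adj v u) :
      (pathGraph m).Adj (e ⟨v, hv⟩) (e ⟨u, hu⟩) := e.map_adj_iff.mpr hvu
  have hne {u w} (hu : 2 ≤ (G.neighborSet u).ncard) (hw : 2 ≤ (G.neighborSet w).ncard)
      (huw : u ≠ w) : (e ⟨u, hu⟩ : ℕ) ≠ e ⟨w, hw⟩ := fun h =>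
    huw (congrArg Subtype.val (e.injective (Fin.ext h)))
  have := pathGraph_adj.mp (hadj ha hva)
  have := pathGraph_adj.mp (hadj hb hvb)
  have := pathGraph_adj.mp (hadj hd hvd)
  have := hne ha hb hab
  have := hne ha hd had
  have := hne hb hd hbd
  omega

theorem IsCaterpillar.le_two_of_iso_treeT (hG : IsCaterpillar G) {p q : ℕ} {h : q ≤ p}
    (e : G ≃g treeT p q h) : q ≤ 2 := by
  let a (j : Fin q) : V := e.symm (.inr (.inl (Fin.castLE h j)))
  have ha : Function.Injective a :=
    e.symm.injective.comp (Sum.inr_injective.comp (Sum.inl_injective.comp (Fin.castLE_injective h)))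
  have hmem : Set.range a ⊆ {u | G.Adj (e.symm (.inl ())) u ∧ 2 ≤ (G.neighborSet u).ncard} := by
    rintro _ ⟨j, rfl⟩
    refine ⟨e.symm.map_adj_iff.mpr (treeT_adj_inl.mpr ⟨_, rfl⟩), (Set.one_lt_ncard_iff).mpr
      ⟨e.symm (.inl ()), e.symm (.inr (.inr j)), ?_, ?_, by simp⟩⟩
    · exact e.symm.map_adj_iff.mpr (treeT_adj_inr_inl.mpr (.inl rfl))
    · exact e.symm.map_adj_iff.mpr (treeT_adj_inr_inl.mpr (.inr ⟨j, rfl, rfl⟩))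
  calc q = (Set.range a).ncard := by rw [Set.ncard_range_of_injective ha, Nat.card_fin]
    _ ≤ _ := Set.ncard_le_ncard hmem
    _ ≤ 2 := hG.ncard_inner_neighbors_le_two _

theorem nonempty_treeT_two_zero_iso_treeT_one_one :
    Nonempty (treeT 2 0 (by omega) ≃g treeT 1 1 (by omega)) := by
  let f : Unit ⊕ Fin 2 ⊕ Fin 0 → Unit ⊕ Fin 1 ⊕ Fin 1 :=
    Sum.elim (fun _ => .inr (.inl 0)) (Sum.elim ![.inl (), .inr (.inr 0)] Fin.elim0)
  have hf : Function.Bijective f := by decide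
  have hadj (u v) : (treeT 1 1 (by omega)).Adj (f u) (f v) ↔ (treeT 2 0 (by omega)).Adj u v := by
    revert u v
    simp [f, Fin.forall_fin_two, Sum.forall, treeT]
  exact ⟨.ofBijective f hf, hadj _ _⟩

theorem IsCaterpillar.exists_iso_treeT_iff (hG : IsCaterpillar G) (hV : 3 ≤ Fintype.card V) :
    (∃ p q, ∃ h : q ≤ p, p ≤ q + 2 ∧ Nonempty (G ≃g treeT p q h)) ↔
      Nonempty (G ≃g treeT 1 1 (by omega)) ∨
      Nonempty (G ≃g treeT 2 1 (by omega)) ∨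
      Nonempty (G ≃g treeT 2 2 (by omega)) ∨
      Nonempty (G ≃g treeT 3 1 (by omega)) ∨
      Nonempty (G ≃g treeT 3 2 (by omega)) ∨
      Nonempty (G ≃g treeT 4 2 (by omega)) := by
  constructor
  · rintro ⟨p, q, h, hp, ⟨e⟩⟩
    have hcard := card_eq_of_iso_treeT e
    rw [Nat.card_eq_fintype_card] at hcard
    have hq := hG.le_two_of_iso_treeT e
    obtain ⟨f⟩ := nonempty_treeT_two_zero_iso_treeT_one_one
    interval_cases q <;> interval_cases p
    · omega
    · omega
    · exact .inl ⟨e.trans f⟩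
    all_goals
      have : Nonempty _ := ⟨e⟩
      tauto
  · rintro (e | e | e | e | e | e)
    all_goals exact ⟨_, _, _, by omega, e⟩

end Caterpillar

/-- a caterpillar `G` of order `n ≥ 3` satisfies `phi G ≥ ⌈n/2⌉ + 1`, with
equality iff `G` is isomorphic to one of `T(1,1), T(2,1), T(2,2), T(3,1), T(3,2), T(4,2)`. -/
theorem stmt7 {V : Type*} [Fintype V] (G : SimpleGraph V) (n : ℕ) (hn : 3 ≤ n)
    (hcard : Fintype.card V = n) (hG : IsCaterpillar G) :
    (n + 1) / 2 + 1 ≤ phi G ∧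
      (phi G = (n + 1) / 2 + 1 ↔
        Nonempty (G ≃g treeT 1 1 (by omega)) ∨
        Nonempty (G ≃g treeT 2 1 (by omega)) ∨
        Nonempty (G ≃g treeT 2 2 (by omega)) ∨
        Nonempty (G ≃g treeT 3 1 (by omega)) ∨
        Nonempty (G ≃g treeT 3 2 (by omega)) ∨
        Nonempty (G ≃g treeT 4 2 (by omega))) := by
  obtain ⟨hle, heq⟩ := stmt7_general G n hn hcard hG.1
  exact ⟨hle, heq.trans (hG.exists_iso_treeT_iff (hcard ▸ hn))⟩
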